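/- Let d ≥ 2, k ≥ 2, 1 ≤ t ≤ k−1, let ψ ∈ ℂ^d be a unit vector with projector P = |ψ⟩⟨ψ|, let Ω = P + λ(I − P) with λ ∈ [0,1), and let σ_ε = (1−ε)P + ε(I − P)/(d−1) with ε ∈ [0,1]. With S_k the cyclic-shift unitary on (ℂ^d)^{⊗k} and D_k = (I + S_k)/2, one has tr[(Ω^{⊗t} ⊗ P ⊗ I^{⊗(k−t−1)}) · D_k σ_ε^{⊗k} D_k†] = (1/2)[(1−ε)(1 − (1−λ)ε)^t + (1−ε)^k]. -/

import Mathlib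

open Matrix Kronecker BigOperators

noncomputable section

/-- The cyclically previous index: `m - 1 (mod k)`. -/
def prevIdx {k : ℕ} (m : Fin k) : Fin k :=
  ⟨(m.val + (k - 1)) % k, Nat.mod_lt _ m.pos⟩

/-- The cyclic-shift unitary `S_k` on `(ℂ^d)^{⊗k}`, determined by
`S_k (v_1 ⊗ ⋯ ⊗ v_k) = v_k ⊗ v_1 ⊗ ⋯ ⊗ v_{k-1}`, written as a matrix in the
standard tensor-product basis indexed by functions `Fin k → Fin d`. -/
def cyc (d k : ℕ) : Matrix (Fin k → Fin d) (Fin k → Fin d) ℂ :=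
  fun g f => if g = fun m => f (prevIdx m) then 1 else 0

/-- The SWAP projection `D_k = (I + S_k)/2`. -/
def Dk (d k : ℕ) : Matrix (Fin k → Fin d) (Fin k → Fin d) ℂ :=
  (1 / 2 : ℂ) • (1 + cyc d k)

/-- The tensor product `A_1 ⊗ A_2 ⊗ ⋯ ⊗ A_k` of `d × d` matrices, acting
factor-wise on `(ℂ^d)^{⊗k}`. -/
def tensOp {d k : ℕ} (A : Fin k → Matrix (Fin d) (Fin d) ℂ) :
    Matrix (Fin k → Fin d) (Fin k → Fin d) ℂ :=
  fun g f => ∏ m, A m (g m) (f m)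

/-- The tensor product `v_1 ⊗ ⋯ ⊗ v_k` of vectors in `ℂ^d`. -/
def tensVec {d k : ℕ} (v : Fin k → (Fin d → ℂ)) : (Fin k → Fin d) → ℂ :=
  fun f => ∏ m, v m (f m)

/-- The partial trace over the last `k - 1` tensor factors, mapping matrices on
`(ℂ^d)^{⊗k}` to `d × d` matrices by tracing out factors `2` through `k`. -/
def ptraceFirst {d k : ℕ} (M : Matrix (Fin k → Fin d) (Fin k → Fin d) ℂ) :
    Matrix (Fin d) (Fin d) ℂ :=
  fun a b => ∑ r : {i : Fin k // i.val ≠ 0} → Fin d,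
    M (fun m => if h : m.val = 0 then a else r ⟨m, h⟩)
      (fun m => if h : m.val = 0 then b else r ⟨m, h⟩)

/-!
Write `X_m = A_m σ`, where `A_m` is the operator on the `m`-th factor. Since `S` is unitary and
commutes with `σ^{⊗k}`, expanding `D σ^{⊗k} D†` leaves the traces of `⊗ X_m`, `(⊗ X_m) S` and
`(⊗ X_m) S†`. The first is `∏ tr X_m`; the other two are the traces of the ordered products
`X_k ⋯ X_1` and `X_1 ⋯ X_k`. Every `X_m` multiplies `P` by the scalar `1 - ε`, on either side, and
the factor with `A_m = P` is itself `(1 - ε) P`, so both ordered products collapse to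
`(1 - ε)^k P`.
-/

section OrderedProducts

variable {R M ι : Type*}

lemma list_prod_mul_eq_pow_smul [CommSemiring R] [Semiring M] [Algebra R M] {l : List M} {p : M}
    {b : R} (h : ∀ x ∈ l, x * p = b • p) : l.prod * p = b ^ l.length • p := by
  induction l with
  | nil => simp
  | cons x l ih =>
    rw [List.forall_mem_cons] at h
    rw [List.prod_cons, mul_assoc, ih h.2, mul_smul_comm, h.1, smul_smul, List.length_cons,
      pow_succ]

lemma mul_list_prod_eq_pow_smul [CommSemiring R] [Semiring M] [Algebra R M] {l : List M} {p : M}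
    {b : R} (h : ∀ x ∈ l, p * x = b • p) : p * l.prod = b ^ l.length • p := by
  induction l with
  | nil => simp
  | cons x l ih =>
    rw [List.forall_mem_cons] at h
    rw [List.prod_cons, ← mul_assoc, h.1, smul_mul_assoc, ih h.2, smul_smul, List.length_cons,
      pow_succ']

lemma list_prod_eq_pow_smul_of_mem [CommSemiring R] [Semiring M] [Algebra R M] {l : List M} {p : M}
    {b : R} (hl : ∀ x ∈ l, x * p = b • p) (hr : ∀ x ∈ l, p * x = b • p) (hp : b • p ∈ l) :
    l.prod = b ^ l.length • p := by
  obtain ⟨l₁, l₂, rfl⟩ := List.append_of_mem hp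
  have hl₁ : l₁.prod * p = b ^ l₁.length • p :=
    list_prod_mul_eq_pow_smul fun x hx => hl x (by simp [hx])
  have hl₂ : p * l₂.prod = b ^ l₂.length • p :=
    mul_list_prod_eq_pow_smul fun x hx => hr x (by simp [hx])
  calc (l₁ ++ b • p :: l₂).prod = b • (l₁.prod * p * l₂.prod) := by
        simp only [List.prod_append, List.prod_cons, smul_mul_assoc, mul_smul_comm, mul_assoc]
    _ = b ^ (l₁ ++ b • p :: l₂).length • p := by
        rw [hl₁, smul_mul_assoc, hl₂, smul_smul, smul_smul, List.length_append, List.length_cons]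
        ring_nf

-- A path `a → f 0 → ⋯ → f (n - 1) → b` has row indices `cons a f` and column indices `snoc f b`.
lemma list_prod_ofFn_apply [CommSemiring R] [Fintype ι] [DecidableEq ι] {n : ℕ}
    (X : Fin (n + 1) → Matrix ι ι R) (a b : ι) :
    (List.ofFn X).prod a b = ∑ f : Fin n → ι,
      ∏ m, X m ((Fin.cons a f : Fin (n + 1) → ι) m) ((Fin.snoc f b : Fin (n + 1) → ι) m) := by
  induction n generalizing a with
  | zero => simp [Fin.snoc]
  | succ n ih =>
    rw [List.ofFn_succ, List.prod_cons, Matrix.mul_apply,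
      ← (Fin.consEquiv fun _ => ι).sum_comp, Fintype.sum_prod_type]
    refine Finset.sum_congr rfl fun c _ => ?_
    rw [ih, Finset.mul_sum]
    refine Finset.sum_congr rfl fun f _ => ?_
    rw [Fin.prod_univ_succ (n := n + 1)]
    simp [Fin.consEquiv, ← Fin.cons_snoc_eq_snoc_cons]

lemma trace_list_prod_ofFn [CommSemiring R] [Fintype ι] [DecidableEq ι] {k : ℕ} (hk : k ≠ 0)
    (X : Fin k → Matrix ι ι R) :
    (List.ofFn X).prod.trace = ∑ f : Fin k → ι, ∏ m, X m (f m) (f (finRotate k m)) := by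
  obtain ⟨n, rfl⟩ := Nat.exists_eq_succ_of_ne_zero hk
  rw [← (Fin.consEquiv fun _ => ι).sum_comp, Fintype.sum_prod_type]
  simp only [Matrix.trace, Matrix.diag_apply, list_prod_ofFn_apply, Fin.snoc_eq_cons_rotate,
    Fin.consEquiv, Equiv.coe_fn_mk]

end OrderedProducts

section TensorPowers

variable {d k : ℕ}

lemma tensOp_mul_tensOp (A B : Fin k → Matrix (Fin d) (Fin d) ℂ) :
    tensOp A * tensOp B = tensOp fun m => A m * B m := by
  ext f g
  simp only [tensOp, Matrix.mul_apply, Fintype.prod_sum, Finset.prod_mul_distrib]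

lemma trace_tensOp (A : Fin k → Matrix (Fin d) (Fin d) ℂ) :
    (tensOp A).trace = ∏ m, (A m).trace := by
  simp only [tensOp, Matrix.trace, Matrix.diag_apply, Fintype.prod_sum]

lemma transpose_tensOp (A : Fin k → Matrix (Fin d) (Fin d) ℂ) :
    (tensOp A)ᵀ = tensOp fun m => (A m)ᵀ := rfl

lemma prevIdx_eq_finRotate_symm (m : Fin k) : prevIdx m = (finRotate k).symm m := by
  rw [Equiv.eq_symm_apply]
  obtain ⟨n, rfl⟩ := Nat.exists_eq_succ_of_ne_zero m.pos.ne'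
  rw [finRotate_apply]
  ext
  have hm : (m : ℕ) + n + 1 = m + (n + 1) := rfl
  simp [prevIdx, Fin.val_add, hm, Nat.mod_eq_of_lt m.isLt]

/-- The permutation `f ↦ f ∘ (· + 1)` of the standard basis of `(ℂ^d)^{⊗k}`. As `Matrix.permMatrix`
has its `1` in row `i` at column `σ i`, it is the permutation that represents `S_k`. -/
def rotateBasis (d k : ℕ) : Equiv.Perm (Fin k → Fin d) :=
  (finRotate k).symm.arrowCongr (Equiv.refl _)

lemma cyc_eq_permMatrix : cyc d k = (rotateBasis d k).permMatrix ℂ := by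
  ext g f
  have hgf : (g = fun m => f (prevIdx m)) ↔ rotateBasis d k g = f := by
    rw [← Equiv.eq_symm_apply]
    simp only [prevIdx_eq_finRotate_symm]
    rfl
  simp [cyc, hgf, Equiv.toPEquiv_apply, eq_comm]

lemma conjTranspose_cyc : (cyc d k)ᴴ = (cyc d k)ᵀ := by
  rw [cyc_eq_permMatrix, conjTranspose_permMatrix, transpose_permMatrix]

lemma cyc_mul_conjTranspose : cyc d k * (cyc d k)ᴴ = 1 := by
  rw [cyc_eq_permMatrix, conjTranspose_permMatrix, ← permMatrix_mul, inv_mul_cancel,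
    permMatrix_one]

lemma commute_tensOp_const_cyc (σ : Matrix (Fin d) (Fin d) ℂ) :
    Commute (tensOp fun _ : Fin k => σ) (cyc d k) := by
  rw [Commute, SemiconjBy, cyc_eq_permMatrix, PEquiv.mul_toMatrix_toPEquiv,
    PEquiv.toMatrix_toPEquiv_mul]
  ext f g
  simpa [tensOp, rotateBasis, -finRotate_apply] using
    (Equiv.prod_comp (finRotate k) fun m => σ (f m) (g ((finRotate k).symm m))).symm

lemma trace_tensOp_mul_conjTranspose_cyc (hk : k ≠ 0) (X : Fin k → Matrix (Fin d) (Fin d) ℂ) :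
    (tensOp X * (cyc d k)ᴴ).trace = (List.ofFn X).prod.trace := by
  rw [cyc_eq_permMatrix, conjTranspose_permMatrix, PEquiv.mul_toMatrix_toPEquiv,
    trace_list_prod_ofFn hk]
  rfl

lemma trace_tensOp_mul_cyc (hk : k ≠ 0) (X : Fin k → Matrix (Fin d) (Fin d) ℂ) :
    (tensOp X * cyc d k).trace = (List.ofFn X).reverse.prod.trace := by
  rw [← trace_transpose, transpose_mul, trace_mul_comm, transpose_tensOp, ← conjTranspose_cyc,
    trace_tensOp_mul_conjTranspose_cyc hk, ← trace_transpose (List.prod _), transpose_list_prod,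
    List.map_ofFn]
  rfl

lemma Dk_mul_mul_conjTranspose_of_commute {T : Matrix (Fin k → Fin d) (Fin k → Fin d) ℂ}
    (hT : Commute T (cyc d k)) :
    Dk d k * T * (Dk d k)ᴴ = (1 / 4 : ℂ) • ((2 : ℂ) • T + T * cyc d k + T * (cyc d k)ᴴ) := by
  have hSTS : cyc d k * T * (cyc d k)ᴴ = T := by
    rw [← hT.eq, mul_assoc, cyc_mul_conjTranspose, mul_one]
  have hD : (Dk d k)ᴴ = (1 / 2 : ℂ) • (1 + (cyc d k)ᴴ) := by simp [Dk]
  calc Dk d k * T * (Dk d k)ᴴ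
      = (1 / 4 : ℂ) • (T + cyc d k * T + T * (cyc d k)ᴴ + cyc d k * T * (cyc d k)ᴴ) := by
        rw [hD, Dk]
        simp only [smul_mul_assoc, mul_smul_comm, add_mul, mul_add, one_mul, mul_one]
        module
    _ = (1 / 4 : ℂ) • ((2 : ℂ) • T + T * cyc d k + T * (cyc d k)ᴴ) := by
        rw [hSTS, hT.eq]
        module

theorem trace_tensOp_mul_Dk_conj {A : Fin k → Matrix (Fin d) (Fin d) ℂ}
    {P σ : Matrix (Fin d) (Fin d) ℂ} {b : ℂ} (hP : P.trace = 1) (hAP : ∀ m, A m * P = P)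
    (hPA : ∀ m, P * A m = P) (hσP : σ * P = b • P) (hPσ : P * σ = b • P)
    {j : Fin k} (hj : A j = P) :
    (tensOp A * (Dk d k * tensOp (fun _ : Fin k => σ) * (Dk d k)ᴴ)).trace
      = (1 / 2 : ℂ) * (∏ m, (A m * σ).trace + b ^ k) := by
  set X : Fin k → Matrix (Fin d) (Fin d) ℂ := fun m => A m * σ
  have hk : k ≠ 0 := j.pos.ne'
  have hXP (m : Fin k) : X m * P = b • P := by rw [mul_assoc, hσP, mul_smul_comm, hAP]
  have hPX (m : Fin k) : P * X m = b • P := by rw [← mul_assoc, hPA, hPσ]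
  have hXj : X j = b • P := by rw [← hPσ, ← hj]
  have hprod {l : List (Matrix (Fin d) (Fin d) ℂ)} (hl : l.Perm (List.ofFn X)) :
      l.prod.trace = b ^ k := by
    have hmem : ∀ x, x ∈ l ↔ ∃ m, X m = x := fun x => hl.mem_iff.trans List.mem_ofFn
    rw [list_prod_eq_pow_smul_of_mem (p := P) (b := b) (by simpa [hmem] using hXP)
      (by simpa [hmem] using hPX) ((hmem _).2 ⟨j, hXj⟩), trace_smul, hP, hl.length_eq,
      List.length_ofFn, smul_eq_mul, mul_one]
  rw [Dk_mul_mul_conjTranspose_of_commute (commute_tensOp_const_cyc σ)]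
  simp only [mul_smul_comm, mul_add, ← mul_assoc, tensOp_mul_tensOp, trace_smul, trace_add]
  rw [trace_tensOp, trace_tensOp_mul_cyc hk, trace_tensOp_mul_conjTranspose_cyc hk,
    hprod (List.reverse_perm _), hprod (List.Perm.refl _)]
  simp only [smul_eq_mul]
  ring

end TensorPowers

section TwoEigen

variable {R M : Type*} [CommRing R] [Ring M] [Algebra R M]

/-- The operator with eigenvalue `a` on the range of the idempotent `P` and `b` on its kernel. The
verification operator `Ω`, the white-noise state `σ_ε`, `P` and the identity are all of this
form. -/
def twoEigen (P : M) (a b : R) : M := a • P + b • (1 - P)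

lemma twoEigen_mul_twoEigen {P : M} (hP : IsIdempotentElem P) (a b a' b' : R) :
    twoEigen P a b * twoEigen P a' b' = twoEigen P (a * a') (b * b') := by
  simp only [twoEigen, add_mul, mul_add, smul_mul_smul_comm, hP.eq, hP.mul_one_sub_self,
    hP.one_sub_mul_self, hP.one_sub.eq, smul_zero, add_zero, zero_add]

lemma twoEigen_one_zero (P : M) : twoEigen P (1 : R) 0 = P := by
  simp [twoEigen]

lemma twoEigen_one_one (P : M) : twoEigen P (1 : R) 1 = 1 := by
  simp [twoEigen]

lemma twoEigen_mul_self {P : M} (hP : IsIdempotentElem P) (a b : R) :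
    twoEigen P a b * P = a • P := by
  simp [twoEigen, add_mul, hP.eq, hP.one_sub_mul_self]

lemma self_mul_twoEigen {P : M} (hP : IsIdempotentElem P) (a b : R) :
    P * twoEigen P a b = a • P := by
  simp [twoEigen, mul_add, hP.eq, hP.mul_one_sub_self]

lemma trace_twoEigen {n : Type*} [Fintype n] [DecidableEq n] {P : Matrix n n R}
    (hP : P.trace = 1) (a b : R) : (twoEigen P a b).trace = a + b * (Fintype.card n - 1) := by
  simp [twoEigen, hP]

end TwoEigen

lemma prod_fin_ite_lt_ite_eq {M : Type*} [CommMonoid M] {k t : ℕ} (ht : t < k) (x y : M) :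
    ∏ m : Fin k, (if m.val < t then x else if m.val = t then y else 1) = y * x ^ t := by
  obtain ⟨r, rfl⟩ := Nat.exists_eq_add_of_lt ht
  rw [Fin.prod_univ_eq_prod_range fun i => if i < t then x else if i = t then y else 1,
    add_right_comm, Finset.prod_range_add, Finset.prod_range_succ,
    Finset.prod_congr rfl fun i hi => if_pos (Finset.mem_range.1 hi)]
  simp [add_assoc, mul_comm]

lemma isIdempotentElem_vecMulVec_star {n R : Type*} [Fintype n] [CommSemiring R] [StarRing R]
    {ψ : n → R} (hψ : star ψ ⬝ᵥ ψ = 1) : IsIdempotentElem (vecMulVec ψ (star ψ)) := by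
  rw [IsIdempotentElem, vecMulVec_mul_vecMulVec, hψ, one_smul]

theorem stmt9_general {d k t : ℕ} (hd : d ≠ 1) (ht : t < k) {P : Matrix (Fin d) (Fin d) ℂ}
    (hP : IsIdempotentElem P) (htr : P.trace = 1) (lam ε : ℂ) :
    (tensOp (fun m : Fin k =>
          if m.val < t then P + lam • (1 - P) else if m.val = t then P else 1)
        * (Dk d k * tensOp (fun _ : Fin k => (1 - ε) • P + (ε / (d - 1)) • (1 - P))
          * (Dk d k)ᴴ)).trace
      = (1 / 2 : ℂ) * ((1 - ε) * (1 - (1 - lam) * ε) ^ t + (1 - ε) ^ k) := by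
  have hd' : (d : ℂ) - 1 ≠ 0 := sub_ne_zero.2 (by exact_mod_cast hd)
  set μ : Fin k → ℂ := fun m => if m.val < t then lam else if m.val = t then 0 else 1 with hμ
  have hA : (fun m : Fin k => if m.val < t then P + lam • (1 - P) else if m.val = t then P else 1)
      = fun m => twoEigen P 1 (μ m) := by
    funext m
    simp only [hμ]
    split_ifs
    · rw [twoEigen, one_smul]
    · rw [twoEigen_one_zero]
    · rw [twoEigen_one_one]
  have htrace (m : Fin k) : (twoEigen P 1 (μ m) * twoEigen P (1 - ε) (ε / (d - 1))).trace
      = if m.val < t then 1 - (1 - lam) * ε else if m.val = t then 1 - ε else 1 := by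
    rw [twoEigen_mul_twoEigen hP, trace_twoEigen htr, Fintype.card_fin, mul_assoc,
      div_mul_cancel₀ _ hd']
    simp only [hμ]
    split_ifs <;> ring
  rw [hA, ← twoEigen, trace_tensOp_mul_Dk_conj (b := 1 - ε) (j := ⟨t, ht⟩) htr
    (by simp [twoEigen_mul_self hP]) (by simp [self_mul_twoEigen hP])
    (twoEigen_mul_self hP _ _) (self_mul_twoEigen hP _ _) (by simp [hμ, twoEigen_one_zero])]
  simp only [htrace, prod_fin_ite_lt_ite_eq ht]

/-- with `P` inserted on factor `t+1`,
`tr[(Ω^{⊗t} ⊗ P ⊗ I^{⊗(k−t−1)}) · D_k σ_ε^{⊗k} D_k†]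
  = (1/2)[(1−ε)(1−(1−λ)ε)^t + (1−ε)^k]`. -/
theorem stmt9 (d k t : ℕ) (hd : 2 ≤ d) (hk : 2 ≤ k) (ht1 : 1 ≤ t) (ht2 : t ≤ k - 1)
    (ψ : Fin d → ℂ) (hψ : star ψ ⬝ᵥ ψ = 1)
    (lam ε : ℝ) (hlam0 : 0 ≤ lam) (hlam1 : lam < 1) (hε0 : 0 ≤ ε) (hε1 : ε ≤ 1)
    (P Ω σ : Matrix (Fin d) (Fin d) ℂ)
    (hP : P = vecMulVec ψ (star ψ))
    (hΩ : Ω = P + (lam : ℂ) • (1 - P))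
    (hσ : σ = ((1 - ε : ℝ) : ℂ) • P + ((ε / ((d : ℝ) - 1) : ℝ) : ℂ) • (1 - P)) :
    (tensOp (fun m : Fin k => if m.val < t then Ω else if m.val = t then P else 1)
        * (Dk d k * tensOp (fun _ : Fin k => σ) * (Dk d k)ᴴ)).trace
      = (1 / 2 : ℂ) * (((1 - ε) * (1 - (1 - lam) * ε) ^ t + (1 - ε) ^ k : ℝ) : ℂ) := by
  have htr : P.trace = 1 := by rw [hP, trace_vecMulVec, dotProduct_comm, hψ]
  rw [hΩ, hσ]
  exact_mod_cast stmt9_general (by omega) (by omega) (hP ▸ isIdempotentElem_vecMulVec_star hψ) htr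
    lam ε
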